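/- Let R be a Dedekind domain with torsion class group, O ⊆ R an order with conductor f such that R/f is finite and every class of Cl(R) contains a prime ideal coprime to f. If |Cl(R)| ≠ 2 and O is transfer Krull, then Pic(O) ≅ Cl(R). -/

import Mathlib

open scoped nonZeroDivisors

section MonoidDefs
variable {H B : Type*} [CommMonoid H] [CommMonoid B]

/-- The set of lengths of `a`: `{0}` for units, otherwise the set of `k` such that
`a` is a product of `k` atoms (irreducible elements). -/
def lengthsSet (a : H) : Set ℕ :=
  {k | (IsUnit a ∧ k = 0) ∨
    (¬ IsUnit a ∧ ∃ l : Multiset H, Multiset.card l = k ∧ (∀ x ∈ l, Irreducible x) ∧ l.prod = a)}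

/-- A transfer homomorphism: (T1) `B = θ(H)·B^×` and `θ⁻¹(B^×) = H^×`;
(T2) factorizations of `θ u` lift to factorizations of `u` up to associates. -/
def IsTransferHom (θ : H →* B) : Prop :=
  (∀ b : B, ∃ u : H, ∃ ε : Bˣ, b = θ u * ε) ∧
  (∀ u : H, IsUnit (θ u) → IsUnit u) ∧
  (∀ u : H, ∀ b c : B, θ u = b * c →
    ∃ v w : H, u = v * w ∧ Associated (θ v) b ∧ Associated (θ w) c)

/-- A Krull monoid: a monoid admitting a divisor homomorphism into a
free abelian monoid. -/
def IsKrullMonoid (H : Type*) [CommMonoid H] : Prop :=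
  ∃ (ι : Type) (d : H →* Multiplicative (ι →₀ ℕ)), ∀ a b : H, d a ∣ d b → a ∣ b

/-- Half-factorial: all factorizations of an element into atoms have the same length. -/
def IsHalfFactorial (A : Type*) [CommMonoid A] : Prop :=
  ∀ (a : A) (l m : Multiset A), (∀ x ∈ l, Irreducible x) → (∀ x ∈ m, Irreducible x) →
    l.prod = a → m.prod = a → Multiset.card l = Multiset.card m

/-- An absolutely irreducible element: an atom all of whose powers factor uniquely
into atoms, up to associates. -/
def AbsolutelyIrreducible (a : H) : Prop :=
  Irreducible a ∧ ∀ n : ℕ, 0 < n → ∀ l m : Multiset H,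
    (∀ x ∈ l, Irreducible x) → (∀ x ∈ m, Irreducible x) →
    l.prod = a ^ n → m.prod = a ^ n → Multiset.Rel Associated l m

end MonoidDefs

section RingDefs
variable {R : Type*} [CommRing R]

/-- The conductor of a subring `O ⊆ R`: the largest ideal of `R` contained in `O`. -/
def Subring.conductor (O : Subring R) : Ideal R where
  carrier := {x | ∀ r : R, x * r ∈ O}
  add_mem' := by
    intro a b ha hb r
    have h : (a + b) * r = a * r + b * r := by ring
    rw [h]; exact O.add_mem (ha r) (hb r)
  zero_mem' := by intro r; simpa using O.zero_mem
  smul_mem' := by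
    intro c x hx r
    have h : c • x * r = x * (c * r) := by simp [smul_eq_mul]; ring
    rw [h]; exact hx (c * r)

/-- `a` is a regular element modulo the ideal `f`. -/
def RegF (f : Ideal R) (a : R) : Prop := IsUnit (Ideal.Quotient.mk f a)

end RingDefs

section TK
variable {K : Type*} [CommRing K]

/-- `x` and `y` are associated within the submonoid `H` of `K`. -/
def AssocIn (H : Submonoid K) (x y : K) : Prop :=
  ∃ ε ∈ H, (∃ ε' ∈ H, ε * ε' = 1) ∧ x = y * ε

end TK

variable {R₀ : Type*}

/-- `H` is a Krull overmonoid of `O^∙` inside the quotient field of `O` (which is the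
quotient field of `R`), with `O^∙ ⊆ H ⊆ q(O^∙)`, such that the inclusion `O^∙ ↪ H`
is a transfer homomorphism; this witnesses that `O` is transfer Krull. -/
structure IsTKOvermonoid {R : Type*} [CommRing R] [IsDomain R] [IsDedekindDomain R]
    (O : Subring R) (H : Submonoid (FractionRing R)) : Prop where
  nonzero : ∀ x ∈ H, x ≠ 0
  incl : ∀ a : R, a ∈ O → a ≠ 0 → algebraMap R (FractionRing R) a ∈ H
  inQuot : ∀ x ∈ H, ∃ a b : R, a ∈ O ∧ b ∈ O ∧ a ≠ 0 ∧ b ≠ 0 ∧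
    x * algebraMap R (FractionRing R) b = algebraMap R (FractionRing R) a
  krull : IsKrullMonoid ↥H
  t1 : ∀ x ∈ H, ∃ a : R, a ∈ O ∧ a ≠ 0 ∧ ∃ ε ∈ H, (∃ ε' ∈ H, ε * ε' = 1) ∧
    x = algebraMap R (FractionRing R) a * ε
  t1' : ∀ a : R, a ∈ O → a ≠ 0 →
    (∃ y ∈ H, algebraMap R (FractionRing R) a * y = 1) → ∃ b ∈ O, a * b = 1
  t2 : ∀ a : R, a ∈ O → a ≠ 0 → ∀ x ∈ H, ∀ y ∈ H,
    algebraMap R (FractionRing R) a = x * y →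
    ∃ v w : R, v ∈ O ∧ w ∈ O ∧ a = v * w ∧
      AssocIn H (algebraMap R (FractionRing R) v) x ∧
      AssocIn H (algebraMap R (FractionRing R) w) y

/-!
Let `f` be the conductor of `O`. By unique factorization the nonzero principal ideals of `R` coprime
to `f` form the block monoid of `ClassGroup R`: the multisets of primes not containing `f` whose
classes multiply to one. Let `S` be the submonoid of those ideals that are generated by an element
of `O`. Every principal ideal coprime to `f` has a power in `S`, and `S` is closed under quotients.
Since every nonzero element of `R` lies in the Krull overmonoid `H`, condition (T2) splits an
element of `S` along every factorization of its generator in `R`, up to units of `H`.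

Splitting powers of `A⁻¹ B` along `A⁻¹ A = ∏ p⁻¹ p` shows that `A` and `B` have the same number of
prime factors of nontrivial class whenever their generators agree up to a unit of `H`. Splitting
the powers of a block with one, two or three factors along that block itself then forces such
blocks into `S`. The pairs `{p, q}` of primes in a common class of order two are reached only
through triples containing a further nontrivial class, which exists when the class group does not
have order two. Blocks of length at most three generate all blocks under products and quotients,
so `S` is everything.

Thus every element of `R` coprime to `f` is a unit of `R` times an element of `O`. As every
invertible ideal class of `O` has a representative coprime to `f`, and ideals coprime to `f`
correspond under extension and contraction, this makes `ClassGroup O → ClassGroup R` bijective.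
-/

/-! ### Multisets with product one -/

theorem exists_ne_and_ne_of_card_ne_two {α : Type*} (hα : Nat.card α ≠ 2) {a b : α} (hab : b ≠ a) :
    ∃ x, x ≠ a ∧ x ≠ b := by
  by_contra! h
  exact hα ((Nat.card_eq_two_iff' a).2 ⟨b, hab, h⟩)

section Multiset

variable {ι G : Type*}

theorem triple_rotate (p q t : ι) : ({p, q, t} : Multiset ι) = {q, t, p} := by
  simp only [Multiset.insert_eq_cons, ← Multiset.singleton_add]
  abel

theorem card_mul_le_card_sum {V : Multiset (Multiset ι)} {k : ℕ} (h : ∀ v ∈ V, k ≤ v.card) :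
    V.card * k ≤ V.sum.card := by
  calc V.card * k = (V.map Multiset.card).card • k := by rw [Multiset.card_map, smul_eq_mul]
    _ ≤ (V.map Multiset.card).sum := Multiset.card_nsmul_le_sum (by simpa using h)
    _ = V.sum.card := (Multiset.card_join V).symm

theorem count_map_sum [DecidableEq G] (c : ι → G) (V : Multiset (Multiset ι)) (g : G) :
    (V.sum.map c).count g = (V.map fun v => (v.map c).count g).sum :=
  map_multiset_sum ((Multiset.countAddMonoidHom g).comp (Multiset.mapAddMonoidHom c)) V

end Multiset

section BlockMonoid

variable {ι G : Type*}

section CommMonoid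

variable [CommMonoid G] {c : ι → G}

/-- The block monoid of `c : ι → G`: the multisets over `ι` whose classes multiply to `1`.
With `ι` the regular primes and `c` their ideal class, these are the principal ideals coprime to the
conductor. -/
def blockMonoid (c : ι → G) : AddSubmonoid (Multiset ι) where
  carrier := {A | (A.map c).prod = 1}
  zero_mem' := by simp
  add_mem' := by
    intro A B hA hB
    simp_all [Set.mem_ofPred_eq]

theorem mem_blockMonoid {A : Multiset ι} : A ∈ blockMonoid c ↔ (A.map c).prod = 1 :=
  Iff.rfl

theorem two_le_card_of_mem_blockMonoid {A : Multiset ι} (hA : A ∈ blockMonoid c) (hA₀ : A ≠ 0)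
    (hcA : ∀ p ∈ A, c p ≠ 1) : 2 ≤ A.card := by
  by_contra! hlt
  obtain ⟨p, rfl⟩ := Multiset.card_eq_one.1
    (le_antisymm (Nat.lt_succ_iff.1 hlt) (Multiset.card_pos.2 hA₀))
  exact hcA p (Multiset.mem_singleton_self p) (by simpa using mem_blockMonoid.1 hA)

/-- The arithmetic of a transfer Krull order, seen on multisets of regular primes: `S` consists of
the multisets whose product ideal is generated by an element of the order, and `E` is equality of
product ideals up to units of the Krull overmonoid. `split` is condition (T2) of a transfer
homomorphism and `eq_zero` its condition on units. -/
structure IsTransferSubmonoid (c : ι → G) (S : AddSubmonoid (Multiset ι))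
    (E : AddCon (Multiset ι)) : Prop where
  le_blockMonoid : S ≤ blockMonoid c
  mem_of_add_mem : ∀ {A B}, A ∈ S → A + B ∈ S → B ∈ S
  exists_nsmul_mem : ∀ {A}, A ∈ blockMonoid c → ∃ n ≠ 0, n • A ∈ S
  eq_zero : ∀ {A}, A ∈ S → E A 0 → A = 0
  split : ∀ {X Y Z}, X ∈ S → Y ∈ blockMonoid c → Z ∈ blockMonoid c → E X (Y + Z) →
    ∃ V ∈ S, ∃ W ∈ S, X = V + W ∧ E V Y ∧ E W Z

namespace IsTransferSubmonoid

variable {S : AddSubmonoid (Multiset ι)} {E : AddCon (Multiset ι)}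

theorem eq_zero_of_mem_blockMonoid (hS : IsTransferSubmonoid c S E) {A : Multiset ι}
    (hA : A ∈ blockMonoid c) (h : E A 0) : A = 0 := by
  obtain ⟨n, hn, hnA⟩ := hS.exists_nsmul_mem hA
  have hEn : E (n • A) 0 := by simpa using E.nsmul n h
  exact (nsmul_eq_zero_iff.1 (hS.eq_zero hnA hEn)).resolve_right hn

theorem exists_rel_of_rel_sum (hS : IsTransferSubmonoid c S E) {L : Multiset (Multiset ι)}
    (hL : ∀ Y ∈ L, Y ∈ blockMonoid c) {X : Multiset ι} (hX : X ∈ S) (hXL : E X L.sum) :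
    ∃ V : Multiset (Multiset ι), V.sum = X ∧ (∀ v ∈ V, v ∈ S) ∧ Multiset.Rel E V L := by
  induction L using Multiset.induction_on generalizing X with
  | empty => exact ⟨0, (hS.eq_zero hX hXL).symm, by simp, .zero⟩
  | cons Y L ih =>
    rw [Multiset.forall_mem_cons] at hL
    rw [Multiset.sum_cons] at hXL
    obtain ⟨v, hv, W, hW, rfl, hvY, hWL⟩ :=
      hS.split hX hL.1 (AddSubmonoid.multiset_sum_mem _ _ hL.2) hXL
    obtain ⟨V, rfl, hV, hVL⟩ := ih hL.2 hW hWL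
    exact ⟨v ::ₘ V, Multiset.sum_cons v V, Multiset.forall_mem_cons.2 ⟨hv, hV⟩, .cons hvY hVL⟩

theorem exists_sum_eq_nsmul (hS : IsTransferSubmonoid c S E) {L : Multiset (Multiset ι)}
    (hL : ∀ Y ∈ L, Y ∈ blockMonoid c) (hL₀ : ∀ Y ∈ L, Y ≠ 0) {X : Multiset ι}
    (hX : X ∈ blockMonoid c) (hXL : E X L.sum) :
    ∃ n ≠ 0, ∃ V : Multiset (Multiset ι), V.sum = n • X ∧ V.card = n * L.card ∧
      ∀ v ∈ V, v ∈ S ∧ v ≠ 0 ∧ v ⊆ X ∧ ∃ Y ∈ L, E v Y := by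
  obtain ⟨n, hn, hnX⟩ := hS.exists_nsmul_mem hX
  obtain ⟨V, hsum, hV, hVL⟩ := hS.exists_rel_of_rel_sum (L := n • L)
    (fun Y hY => hL Y (Multiset.mem_of_mem_nsmul hY)) hnX
    (by rw [Multiset.sum_nsmul]; exact E.nsmul n hXL)
  refine ⟨n, hn, V, hsum, by rw [Multiset.card_eq_card_of_rel hVL, Multiset.card_nsmul],
    fun v hv => ?_⟩
  obtain ⟨Y, hY, hvY⟩ := Multiset.exists_mem_of_rel_of_mem hVL hv
  replace hY := Multiset.mem_of_mem_nsmul hY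
  refine ⟨hV v hv, ?_, fun p hp => ?_, Y, hY, hvY⟩
  · rintro rfl
    exact hL₀ Y hY (hS.eq_zero_of_mem_blockMonoid (hL Y hY) (E.symm hvY))
  · exact Multiset.mem_of_mem_nsmul (hsum ▸ Multiset.subset_of_le (Multiset.le_sum_of_mem hv) hp)

theorem singleton_mem (hS : IsTransferSubmonoid c S E) {p : ι} (hp : c p = 1) : {p} ∈ S := by
  obtain ⟨n, hn, V, hsum, hcard, hV⟩ := hS.exists_sum_eq_nsmul (L := {{p}}) (X := {p})
    (by simpa [mem_blockMonoid]) (by simp) (by simpa [mem_blockMonoid]) (by simpa using E.refl _)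
  by_contra hpS
  have htwo : ∀ v ∈ V, 2 ≤ v.card := fun v hv => by
    obtain ⟨hvS, hv₀, hvp, -⟩ := hV v hv
    by_contra! hlt
    obtain ⟨q, rfl⟩ := Multiset.card_eq_one.1
      (le_antisymm (Nat.lt_succ_iff.1 hlt) (Multiset.card_pos.2 hv₀))
    obtain rfl : q = p := by simpa using hvp
    exact hpS hvS
  have hle := card_mul_le_card_sum htwo
  rw [hsum, hcard, Multiset.card_nsmul, Multiset.card_singleton, Multiset.card_singleton] at hle
  omega

end IsTransferSubmonoid

end CommMonoid

section CommGroup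

variable [CommGroup G] {c : ι → G}

theorem count_map_inv_eq_count_map [DecidableEq G] {A : Multiset ι} (hA : A ∈ blockMonoid c)
    (hcard : A.card = 2) (g : G) : (A.map c).count g⁻¹ = (A.map c).count g := by
  obtain ⟨p, q, rfl⟩ := Multiset.card_eq_two.1 hcard
  have hq : c q = (c p)⁻¹ := by
    rw [eq_inv_iff_mul_eq_one, mul_comm]
    simpa using mem_blockMonoid.1 hA
  simp [Multiset.count_cons, Multiset.count_singleton, hq, inv_eq_iff_eq_inv, add_comm]

namespace IsTransferSubmonoid

variable {S : AddSubmonoid (Multiset ι)} {E : AddCon (Multiset ι)}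

-- Writing `A⁻¹` for `A.map i`: `B + A⁻¹` is related to `A + A⁻¹`, the sum of the pairs `{p, p⁻¹}`.
theorem exists_sum_eq_nsmul_add_map_inv (hS : IsTransferSubmonoid c S E) {i : ι → ι}
    (hi : ∀ p, c (i p) = (c p)⁻¹) {A B : Multiset ι} (hA : A ∈ blockMonoid c)
    (hB : B ∈ blockMonoid c) (hAB : E A B) :
    ∃ n ≠ 0, ∃ V : Multiset (Multiset ι), V.sum = n • (B + A.map i) ∧ V.card = n * A.card ∧
      ∀ v ∈ V, v ∈ S ∧ v ≠ 0 ∧ v ⊆ B + A.map i ∧ ∃ p ∈ A, E v {p, i p} := by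
  have hA' : A.map i ∈ blockMonoid c := by
    simp only [mem_blockMonoid, Multiset.map_map, Function.comp_apply, hi, Multiset.prod_map_inv]
    rw [mem_blockMonoid.1 hA, inv_one]
  have hsum : (A.map fun p => ({p, i p} : Multiset ι)).sum = A + A.map i := by
    simp only [Multiset.insert_eq_cons, ← Multiset.singleton_add, Multiset.sum_map_add,
      Multiset.sum_map_singleton]
    rw [← Multiset.sum_map_singleton (A.map i), Multiset.map_map]
    rfl
  obtain ⟨n, hn, V, hV⟩ := hS.exists_sum_eq_nsmul (L := A.map fun p => {p, i p})
    (by simp [mem_blockMonoid, hi]) (by simp) (add_mem hB hA')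
    (by rw [hsum]; exact E.add (E.symm hAB) (E.refl _))
  exact ⟨n, hn, V, by simpa using hV⟩

theorem card_le_card_of_rel (hS : IsTransferSubmonoid c S E) (hc : Function.Surjective c)
    {A B : Multiset ι} (hA : A ∈ blockMonoid c) (hB : B ∈ blockMonoid c)
    (hcA : ∀ p ∈ A, c p ≠ 1) (hcB : ∀ p ∈ B, c p ≠ 1) (hAB : E A B) : A.card ≤ B.card := by
  choose i hi using fun p => hc (c p)⁻¹
  obtain ⟨n, hn, V, hsum, hcard, hV⟩ := hS.exists_sum_eq_nsmul_add_map_inv hi hA hB hAB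
  have htwo : ∀ v ∈ V, 2 ≤ v.card := fun v hv => by
    obtain ⟨hvS, hv₀, hvsub, -⟩ := hV v hv
    refine two_le_card_of_mem_blockMonoid (hS.le_blockMonoid hvS) hv₀ fun q hq => ?_
    rcases Multiset.mem_add.1 (hvsub hq) with hqB | hqA
    · exact hcB q hqB
    · obtain ⟨p, hp, rfl⟩ := Multiset.mem_map.1 hqA
      rw [hi, inv_ne_one]
      exact hcA p hp
  have hle := card_mul_le_card_sum htwo
  rw [hsum, hcard, Multiset.card_nsmul, Multiset.card_add, Multiset.card_map, mul_assoc] at hle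
  have := Nat.le_of_mul_le_mul_left hle (Nat.pos_of_ne_zero hn)
  omega

theorem card_eq_card_of_rel (hS : IsTransferSubmonoid c S E) (hc : Function.Surjective c)
    {A B : Multiset ι} (hA : A ∈ blockMonoid c) (hB : B ∈ blockMonoid c)
    (hcA : ∀ p ∈ A, c p ≠ 1) (hcB : ∀ p ∈ B, c p ≠ 1) (hAB : E A B) : A.card = B.card :=
  (hS.card_le_card_of_rel hc hA hB hcA hcB hAB).antisymm
    (hS.card_le_card_of_rel hc hB hA hcB hcA (E.symm hAB))

-- Each piece of a multiple of `B + A⁻¹` has two elements, of inverse classes, so `g` and `g⁻¹`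
-- occur equally often in `B + A⁻¹`. As `A⁻¹` contributes `|A|` copies of `g⁻¹`, all `|B| = |A|`
-- elements of `B` have class `g`.
theorem eq_of_rel_of_forall_eq (hS : IsTransferSubmonoid c S E) (hc : Function.Surjective c)
    {A B : Multiset ι} {g : G} (hA : A ∈ blockMonoid c) (hB : B ∈ blockMonoid c) (hg : g * g ≠ 1)
    (hcA : ∀ p ∈ A, c p = g) (hcB : ∀ p ∈ B, c p ≠ 1) (hAB : E A B) : ∀ q ∈ B, c q = g := by
  classical
  choose i hi using fun p => hc (c p)⁻¹
  have hg₁ : g ≠ 1 := fun h => hg (by rw [h, one_mul])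
  have hcA' : ∀ p ∈ A, c p ≠ 1 := fun p hp => hcA p hp ▸ hg₁
  obtain ⟨n, hn, V, hsum, -, hV⟩ := hS.exists_sum_eq_nsmul_add_map_inv hi hA hB hAB
  have hpiece : ∀ v ∈ V, (v.map c).count g⁻¹ = (v.map c).count g := fun v hv => by
    obtain ⟨hvS, -, hvsub, p, hp, hvp⟩ := hV v hv
    refine count_map_inv_eq_count_map (hS.le_blockMonoid hvS) ?_ g
    refine hS.card_eq_card_of_rel hc (hS.le_blockMonoid hvS) (by simp [mem_blockMonoid, hi])
      (fun q hq => ?_) (by simp [hi, hcA' p hp]) hvp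
    rcases Multiset.mem_add.1 (hvsub hq) with hqB | hqA
    · exact hcB q hqB
    · obtain ⟨r, hr, rfl⟩ := Multiset.mem_map.1 hqA
      rw [hi, inv_ne_one]
      exact hcA' r hr
  have hcount : (V.sum.map c).count g⁻¹ = (V.sum.map c).count g := by
    rw [count_map_sum, count_map_sum, Multiset.map_congr rfl hpiece]
  have hrep : (A.map i).map c = Multiset.replicate A.card g⁻¹ := by
    rw [Multiset.map_map, ← Multiset.map_const']
    exact Multiset.map_congr rfl fun p hp => by rw [Function.comp_apply, hi, hcA p hp]
  have hle : (B.map c).card ≤ (B.map c).count g := by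
    have hne : g⁻¹ ≠ g := fun h => hg (by rw [← inv_eq_iff_mul_eq_one, h])
    rw [hsum, Multiset.map_nsmul, Multiset.map_add, Multiset.count_nsmul, Multiset.count_nsmul,
      Multiset.count_add, Multiset.count_add, hrep, Multiset.count_replicate_self,
      Multiset.count_replicate, if_neg hne] at hcount
    have := Nat.eq_of_mul_eq_mul_left (Nat.pos_of_ne_zero hn) hcount
    rw [Multiset.card_map, ← hS.card_eq_card_of_rel hc hA hB hcA' hcB hAB]
    omega
  have hall := Multiset.count_eq_card.1 ((Multiset.count_le_card g _).antisymm hle)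
  exact fun q hq => (hall _ (Multiset.mem_map_of_mem c hq)).symm

theorem exists_cons_mem_of_mem (hS : IsTransferSubmonoid c S E) (hc : Function.Surjective c)
    {X : Multiset ι} (hX : X ∈ blockMonoid c) (hcX : ∀ q ∈ X, c q ≠ 1) {p : ι} (hp : p ∈ X) :
    ∃ v, p ::ₘ v ∈ S ∧ v.card + 1 = X.card ∧ v ⊆ X ∧ E (p ::ₘ v) X := by
  obtain ⟨n, hn, V, hsum, -, hV⟩ := hS.exists_sum_eq_nsmul (L := {X}) (by simpa using hX)
    (fun Y hY h => by simp [← Multiset.mem_singleton.1 hY, h] at hp) hX (by simpa using E.refl X)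
  have hpV : p ∈ V.sum := by rw [hsum, Multiset.mem_nsmul]; exact ⟨hn, hp⟩
  obtain ⟨w, hw, hpw⟩ := Multiset.mem_join.1 hpV
  obtain ⟨v, rfl⟩ := Multiset.exists_cons_of_mem hpw
  obtain ⟨hvS, -, hvX, _, hY, hE⟩ := hV _ hw
  rw [Multiset.mem_singleton.1 hY] at hE
  refine ⟨v, hvS, ?_, (Multiset.cons_subset.1 hvX).2, hE⟩
  rw [← hS.card_eq_card_of_rel hc (hS.le_blockMonoid hvS) hX (fun q hq => hcX q (hvX hq)) hcX hE,
    Multiset.card_cons]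

theorem pair_mem_of_mul_self_ne_one (hS : IsTransferSubmonoid c S E) (hc : Function.Surjective c)
    {p q : ι} (hpq : c p * c q = 1) (hp : c p ≠ 1) (h : c p * c p ≠ 1 ∨ p = q) : {p, q} ∈ S := by
  have hq : c q ≠ 1 := fun hq => hp (by rwa [hq, mul_one] at hpq)
  obtain ⟨v, hvS, hv, hvX, -⟩ := hS.exists_cons_mem_of_mem hc (X := {p, q}) (p := p)
    (by simpa [mem_blockMonoid]) (by simp [hp, hq]) (by simp)
  obtain ⟨r, rfl⟩ := Multiset.card_eq_one.1 (Nat.succ_injective hv)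
  have hr : r = p ∨ r = q := by simpa using hvX
  rcases hr with rfl | rfl
  · rcases h with hpp | rfl
    · exact absurd (by simpa using mem_blockMonoid.1 (hS.le_blockMonoid hvS)) hpp
    · exact hvS
  · exact hvS

theorem cons_mem_of_eq (hS : IsTransferSubmonoid c S E) (hc : Function.Surjective c) {p q : ι}
    (hpq : c p = c q) (hp : c p * c p ≠ 1) {B : Multiset ι} (hB : p ::ₘ B ∈ S) : q ::ₘ B ∈ S := by
  obtain ⟨t, ht⟩ := hc (c p)⁻¹
  have hp₁ : c p ≠ 1 := fun h => hp (by rw [h, one_mul])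
  have hpt : {p, t} ∈ S :=
    hS.pair_mem_of_mul_self_ne_one hc (by rw [ht, mul_inv_cancel]) hp₁ (.inl hp)
  have hqt : {q, t} ∈ S := hS.pair_mem_of_mul_self_ne_one hc (by rw [ht, ← hpq, mul_inv_cancel])
    (hpq ▸ hp₁) (.inl (hpq ▸ hp))
  refine hS.mem_of_add_mem hpt ?_
  convert add_mem hqt hB using 1
  simp only [Multiset.insert_eq_cons, ← Multiset.singleton_add]
  abel

theorem triple_mem_of_triple_mem (hS : IsTransferSubmonoid c S E) (hc : Function.Surjective c)
    {p q t : ι} (hppq : {p, p, q} ∈ S) (hq : c q ≠ 1) (hpqt : c p * c q * c t = 1) :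
    {p, q, t} ∈ S := by
  have hpp : c p * c p * c q = 1 := by
    simpa [mem_blockMonoid, mul_assoc] using hS.le_blockMonoid hppq
  have htp : c p = c t :=
    mul_left_cancel ((mul_right_comm _ _ _).symm.trans (hpp.trans hpqt.symm))
  rw [← triple_rotate]
  exact hS.cons_mem_of_eq hc htp (fun h => hq (by rwa [h, one_mul] at hpp)) hppq

theorem triple_mem_of_ne_one (hS : IsTransferSubmonoid c S E) (hc : Function.Surjective c)
    {p q t : ι} (hpqt : c p * c q * c t = 1) (hp : c p ≠ 1) (hq : c q ≠ 1) (ht : c t ≠ 1) :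
    {p, q, t} ∈ S := by
  have hX : {p, q, t} ∈ blockMonoid c := by simpa [mem_blockMonoid, ← mul_assoc]
  have hcX : ∀ r ∈ ({p, q, t} : Multiset ι), c r ≠ 1 := by simp [hp, hq, ht]
  obtain ⟨v, hvS, hv, hvX, hE⟩ := hS.exists_cons_mem_of_mem hc hX hcX (p := p) (by simp)
  obtain ⟨a, b, rfl⟩ := Multiset.card_eq_two.1 (Nat.succ_injective hv)
  obtain ⟨ha, hb⟩ : (a = p ∨ a = q ∨ a = t) ∧ (b = p ∨ b = q ∨ b = t) := by simpa using hvX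
  have hppq (h : {p, p, q} ∈ S) : {p, q, t} ∈ S := hS.triple_mem_of_triple_mem hc h hq hpqt
  have hppt (h : {p, p, t} ∈ S) : {p, q, t} ∈ S := by
    rw [Multiset.pair_comm]
    exact hS.triple_mem_of_triple_mem hc h ht (by rwa [mul_right_comm])
  rcases ha with ha | ha | ha <;> rcases hb with hb | hb | hb <;> rw [ha, hb] at hvS hE
  · have hppp : c p * c p * c p = 1 := by
      simpa [mem_blockMonoid, ← mul_assoc] using hS.le_blockMonoid hvS
    have hqp : c q = c p := hS.eq_of_rel_of_forall_eq hc (hS.le_blockMonoid hvS) hX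
      (fun h => hp (by rwa [h, one_mul] at hppp)) (by simp) hcX hE q (by simp)
    exact hppq (hS.triple_mem_of_triple_mem hc hvS hp (by rwa [hqp]))
  · exact hppq hvS
  · exact hppt hvS
  · exact hppq (by rwa [Multiset.pair_comm] at hvS)
  · rw [Multiset.pair_comm, ← triple_rotate]
    exact hS.triple_mem_of_triple_mem hc (triple_rotate p q q ▸ hvS) hp (by rwa [mul_comm (c q)])
  · exact hvS
  · exact hppt (by rwa [Multiset.pair_comm] at hvS)
  · rwa [Multiset.pair_comm] at hvS
  · rw [← triple_rotate]
    exact hS.triple_mem_of_triple_mem hc (triple_rotate p t t ▸ hvS) hp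
      (by rwa [mul_comm (c t), mul_right_comm])

theorem pair_mem (hS : IsTransferSubmonoid c S E) (hc : Function.Surjective c)
    (hG : Nat.card G ≠ 2) {p q : ι} (hpq : c p * c q = 1) : {p, q} ∈ S := by
  by_cases hp : c p = 1
  · exact add_mem (hS.singleton_mem hp) (hS.singleton_mem (by rwa [hp, one_mul] at hpq))
  by_cases hpp : c p * c p = 1
  · obtain ⟨g, hg, hgp⟩ := exists_ne_and_ne_of_card_ne_two hG hp
    -- `{p, q} = {p, p} + {q, r, s} - {p, r, s}` for any class `c r` other than `1` and `c p`.
    obtain ⟨r, rfl⟩ := hc g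
    obtain ⟨s, hs⟩ := hc (c p * c r)⁻¹
    have hs₁ : c s ≠ 1 := by
      rw [hs, inv_ne_one]
      exact fun h => hgp (mul_left_cancel (h.trans hpp.symm))
    have hqp : c q = c p := mul_left_cancel (hpq.trans hpp.symm)
    have hprs : {p, r, s} ∈ S := hS.triple_mem_of_ne_one hc (by rw [hs, mul_inv_cancel]) hp hg hs₁
    have hqrs : {q, r, s} ∈ S :=
      hS.triple_mem_of_ne_one hc (by rw [hqp, hs, mul_inv_cancel]) (hqp ▸ hp) hg hs₁
    refine hS.mem_of_add_mem hprs ?_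
    convert add_mem (hS.pair_mem_of_mul_self_ne_one hc hpp hp (.inr rfl)) hqrs using 1
    simp only [Multiset.insert_eq_cons, ← Multiset.singleton_add]
    abel
  · exact hS.pair_mem_of_mul_self_ne_one hc hpq hp (.inl hpp)

theorem triple_mem (hS : IsTransferSubmonoid c S E) (hc : Function.Surjective c)
    (hG : Nat.card G ≠ 2) {p q t : ι} (hpqt : c p * c q * c t = 1) : {p, q, t} ∈ S := by
  by_cases hp : c p = 1
  · exact add_mem (hS.singleton_mem hp) (hS.pair_mem hc hG (by rwa [hp, one_mul] at hpqt))
  by_cases hq : c q = 1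
  · rw [Multiset.insert_eq_cons, Multiset.insert_eq_cons, Multiset.cons_swap]
    exact add_mem (hS.singleton_mem hq) (hS.pair_mem hc hG (by rwa [hq, mul_one] at hpqt))
  by_cases ht : c t = 1
  · exact add_mem (hS.pair_mem hc hG (by rwa [ht, mul_one] at hpqt)) (hS.singleton_mem ht)
  exact hS.triple_mem_of_ne_one hc hpqt hp hq ht

theorem eq_blockMonoid (hS : IsTransferSubmonoid c S E) (hc : Function.Surjective c)
    (hG : Nat.card G ≠ 2) : S = blockMonoid c := by
  refine hS.le_blockMonoid.antisymm fun A hA => ?_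
  induction hn : A.card using Nat.strong_induction_on generalizing A with
  | _ n ih =>
  induction A using Multiset.induction_on with
  | empty => exact zero_mem S
  | cons p A _ =>
  induction A using Multiset.induction_on with
  | empty => exact hS.singleton_mem (by simpa [mem_blockMonoid] using hA)
  | cons q A _ =>
  -- `{p, q} + A = {p, q, t} + ({s} + A) - {s, t}`, with `c s = c p * c q` and `c t = (c s)⁻¹`.
  obtain ⟨s, hs⟩ := hc (c p * c q)
  obtain ⟨t, ht⟩ := hc (c s)⁻¹
  have hsA : s ::ₘ A ∈ S := by
    refine ih (A.card + 1) (by simp [← hn]) (s ::ₘ A) ?_ (Multiset.card_cons s A)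
    simpa [mem_blockMonoid, hs, mul_assoc] using hA
  refine hS.mem_of_add_mem (hS.pair_mem hc hG (p := s) (q := t) (by rw [ht, mul_inv_cancel])) ?_
  convert add_mem (hS.triple_mem hc hG (p := p) (q := q) (t := t) (by rw [ht, hs, mul_inv_cancel]))
    hsA using 1
  simp only [Multiset.insert_eq_cons, ← Multiset.singleton_add]
  abel

end IsTransferSubmonoid

end CommGroup

end BlockMonoid

/-! ### The conductor of an order -/

section Order

variable {R : Type*} [CommRing R]

theorem regF_iff_isCoprime {f : Ideal R} {x : R} : RegF f x ↔ IsCoprime (Ideal.span {x}) f := by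
  simp only [RegF, isUnit_iff_exists_inv, Ideal.isCoprime_iff_exists, Ideal.mem_span_singleton]
  constructor
  · rintro ⟨y, hy⟩
    obtain ⟨y, rfl⟩ := Ideal.Quotient.mk_surjective y
    rw [← map_mul, ← map_one (Ideal.Quotient.mk f), eq_comm, Ideal.Quotient.eq] at hy
    exact ⟨x * y, dvd_mul_right x y, _, hy, add_sub_cancel _ _⟩
  · rintro ⟨_, ⟨y, rfl⟩, s, hs, hxy⟩
    refine ⟨Ideal.Quotient.mk f y, ?_⟩
    rw [← map_mul, ← map_one (Ideal.Quotient.mk f), eq_comm, Ideal.Quotient.eq, ← hxy]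
    simpa using hs

theorem RegF.exists_pow_sub_one_mem {f : Ideal R} (htor : IsMulTorsion (R ⧸ f)ˣ) {x : R}
    (hx : RegF f x) : ∃ n ≠ 0, x ^ n - 1 ∈ f := by
  obtain ⟨u, hu⟩ := hx
  obtain ⟨n, hn, hun⟩ := isOfFinOrder_iff_pow_eq_one.1 (htor u)
  refine ⟨n, hn.ne', ?_⟩
  rw [← Ideal.Quotient.eq, map_pow, map_one, ← hu, ← Units.val_pow_eq_pow_val, hun, Units.val_one]

variable {O : Subring R}

/-- The conductor of `O`, viewed as an ideal of `O` itself. -/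
def conductorInOrder (O : Subring R) : Ideal O := O.conductor.comap (algebraMap O R)

theorem mem_of_mem_conductor {x : R} (hx : x ∈ O.conductor) : x ∈ O := by
  simpa using hx 1

theorem RegF.exists_pow_mem (htor : IsMulTorsion (R ⧸ O.conductor)ˣ) {x : R}
    (hx : RegF O.conductor x) : ∃ n ≠ 0, x ^ n ∈ O := by
  obtain ⟨n, hn, h⟩ := hx.exists_pow_sub_one_mem htor
  exact ⟨n, hn, by simpa using O.add_mem (mem_of_mem_conductor h) O.one_mem⟩

theorem RegF.isCoprime_conductorInOrder (htor : IsMulTorsion (R ⧸ O.conductor)ˣ) {a : O}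
    (ha : RegF O.conductor (a : R)) : IsCoprime (Ideal.span {a}) (conductorInOrder O) := by
  obtain ⟨n, hn, h⟩ := ha.exists_pow_sub_one_mem htor
  rw [Ideal.isCoprime_iff_exists]
  refine ⟨a ^ n, Ideal.mem_span_singleton.2 (dvd_pow_self a hn), 1 - a ^ n, ?_, by ring⟩
  rw [← neg_sub, neg_mem_iff]
  exact h

theorem mem_of_mul_mem {a : O} (ha : IsCoprime (Ideal.span {a}) (conductorInOrder O)) {y : R}
    (hy : (a : R) * y ∈ O) : y ∈ O := by
  obtain ⟨_, hb, s, hs, h⟩ := Ideal.isCoprime_iff_exists.1 ha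
  obtain ⟨b, rfl⟩ := Ideal.mem_span_singleton'.1 hb
  have hy' : y = b * (a * y) + s * y := by
    rw [← mul_assoc, ← add_mul]
    exact_mod_cast (by rw [h, Subring.coe_one, one_mul])
  rw [hy']
  exact O.add_mem (O.mul_mem b.2 hy) (hs y)

theorem exists_coe_eq_mul_of_mem_map {C : Ideal O} {z s : R}
    (hz : z ∈ C.map (algebraMap O R)) (hs : s ∈ O.conductor) : ∃ w ∈ C, (w : R) = z * s := by
  induction hz using Submodule.span_induction generalizing s with
  | mem x hx =>
    obtain ⟨w, hw, rfl⟩ := hx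
    exact ⟨w * ⟨s, mem_of_mem_conductor hs⟩, C.mul_mem_right _ hw, rfl⟩
  | zero => exact ⟨0, C.zero_mem, by simp⟩
  | add x y _ _ ihx ihy =>
    obtain ⟨v, hv, hvx⟩ := ihx hs
    obtain ⟨w, hw, hwy⟩ := ihy hs
    exact ⟨v + w, C.add_mem hv hw, by rw [Subring.coe_add, hvx, hwy, add_mul]⟩
  | smul r x _ ih =>
    obtain ⟨w, hw, h⟩ := ih (O.conductor.mul_mem_left r hs)
    exact ⟨w, hw, by rw [h, smul_eq_mul]; ring⟩

theorem comap_map_of_isCoprime {C : Ideal O} (hC : IsCoprime C (conductorInOrder O)) :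
    (C.map (algebraMap O R)).comap (algebraMap O R) = C := by
  refine le_antisymm (fun z hz => ?_) Ideal.le_comap_map
  obtain ⟨b, hb, s, hs, h⟩ := Ideal.isCoprime_iff_exists.1 hC
  obtain ⟨w, hw, hwz⟩ := exists_coe_eq_mul_of_mem_map hz hs
  have hws : w = z * s := Subtype.ext hwz
  rw [← mul_one z, ← h, mul_add, ← hws]
  exact C.add_mem (C.mul_mem_left z hb) hw

theorem isCoprime_comap {A : Ideal R} (hA : IsCoprime A O.conductor) :
    IsCoprime (A.comap (algebraMap O R)) (conductorInOrder O) := by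
  obtain ⟨a, ha, s, hs, h⟩ := Ideal.isCoprime_iff_exists.1 hA
  have haO : a ∈ O := by
    rw [← add_sub_cancel_right a s, h]
    exact O.sub_mem O.one_mem (mem_of_mem_conductor hs)
  exact Ideal.isCoprime_iff_exists.2
    ⟨⟨a, haO⟩, ha, ⟨s, mem_of_mem_conductor hs⟩, hs, Subtype.ext h⟩

theorem isCoprime_map {C : Ideal O} (hC : IsCoprime C (conductorInOrder O)) :
    IsCoprime (C.map (algebraMap O R)) O.conductor := by
  obtain ⟨b, hb, s, hs, h⟩ := Ideal.isCoprime_iff_exists.1 hC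
  exact Ideal.isCoprime_iff_exists.2
    ⟨b, Ideal.mem_map_of_mem (algebraMap O R) hb, s, hs, congrArg Subtype.val h⟩

theorem map_comap_of_isCoprime {A : Ideal R} (hA : IsCoprime A O.conductor) :
    (A.comap (algebraMap O R)).map (algebraMap O R) = A := by
  refine le_antisymm Ideal.map_comap_le fun z hz => ?_
  obtain ⟨a, ha, s, hs, h⟩ := Ideal.isCoprime_iff_exists.1 (isCoprime_comap hA)
  have hzs : z * s ∈ O := by
    rw [mul_comm]
    exact hs z
  have hz' : z = z * a + z * s := by
    rw [← mul_add]
    exact_mod_cast (by rw [h, Subring.coe_one, mul_one])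
  rw [hz']
  exact add_mem (Ideal.mul_mem_left _ _ (Ideal.mem_map_of_mem (algebraMap O R) ha))
    (Ideal.mem_map_of_mem (algebraMap O R) (x := ⟨z * s, hzs⟩) (A.mul_mem_right _ hz))

theorem comap_span_singleton_of_regF (htor : IsMulTorsion (R ⧸ O.conductor)ˣ) {a : O}
    (ha : RegF O.conductor (a : R)) :
    (Ideal.span {(a : R)}).comap (algebraMap O R) = Ideal.span {a} := by
  rw [← comap_map_of_isCoprime (ha.isCoprime_conductorInOrder htor), Ideal.map_span,
    Set.image_singleton]
  rfl

theorem conductor_ne_bot [IsDomain R] [Module.Finite O R]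
    (hfrac : ∀ r : R, ∃ a b : O, (b : R) ≠ 0 ∧ (b : R) * r = (a : R)) : O.conductor ≠ ⊥ := by
  classical
  obtain ⟨S, hS⟩ := Module.Finite.fg_top (R := O) (M := R)
  choose a b hb hab using hfrac
  refine Submodule.ne_bot_iff _ |>.2 ⟨((∏ r ∈ S, b r : O) : R), fun r => ?_, ?_⟩
  · have hr : r ∈ Submodule.span O (S : Set R) := hS ▸ Submodule.mem_top
    induction hr using Submodule.span_induction with
    | mem r hr =>
      rw [← Finset.prod_erase_mul _ _ hr, Subring.coe_mul, mul_assoc, hab]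
      exact O.mul_mem (SetLike.coe_mem _) (a r).2
    | zero => simp
    | add x y _ _ hx hy =>
      rw [mul_add]
      exact O.add_mem hx hy
    | smul c x _ hx =>
      rw [Subring.smul_def, smul_eq_mul, mul_left_comm]
      exact O.mul_mem c.2 hx
  · push_cast
    exact Finset.prod_ne_zero_iff.2 fun r _ => hb r

theorem finite_isMaximal_conductorInOrder_le [IsDedekindDomain R] [Algebra.IsIntegral O R]
    (hf : O.conductor ≠ ⊥) : {M : Ideal O | M.IsMaximal ∧ conductorInOrder O ≤ M}.Finite := by
  refine ((Ideal.finite_factors hf).image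
    fun v => v.asIdeal.comap (algebraMap O R)).subset fun M ⟨hM, hfM⟩ => ?_
  obtain ⟨Q, hQ, rfl⟩ := Ideal.exists_ideal_over_maximal_of_isIntegral (S := R) M <| by
    rw [(RingHom.injective_iff_ker_eq_bot _).1 Subtype.val_injective]
    exact bot_le
  have hfQ : O.conductor ≤ Q := fun s hs => hfM (x := ⟨s, mem_of_mem_conductor hs⟩) hs
  exact ⟨⟨Q, hQ.isPrime, ne_bot_of_le_ne_bot hf hfQ⟩, Ideal.dvd_iff_le.2 hfQ, rfl⟩

end Order

/-! ### Invertible ideals coprime to a given ideal -/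

section InvertibleIdeal

variable {A : Type*} [CommRing A]

theorem exists_mem_forall_notMem_mul {I : Ideal A} {T : Set (Ideal A)} (hT : T.Finite)
    (hmax : ∀ M ∈ T, M.IsMaximal) (hI : ∀ M ∈ T, ¬ I ≤ M * I) : ∃ u ∈ I, ∀ M ∈ T, u ∉ M * I := by
  classical
  have : Finite T := hT
  have := Fintype.ofFinite T
  have hcop : Pairwise (Function.onFun IsCoprime ((↑) : T → Ideal A)) := fun M N hMN => by
    have := hmax M M.2
    have := hmax N N.2
    exact Ideal.isCoprime_of_isMaximal (Subtype.coe_ne_coe.2 hMN)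
  choose r hr using fun M : T => Ideal.exists_forall_sub_mem_ideal hcop (Pi.single M 1)
  choose i hi hiM using fun M : T => SetLike.not_le_iff_exists.1 (hI M M.2)
  refine ⟨∑ M, r M * i M, sum_mem fun M _ => I.mul_mem_left _ (hi M), fun M hM hu => ?_⟩
  lift M to T using hM
  have hother : ∑ N ∈ Finset.univ.erase M, r N * i N ∈ (M : Ideal A) * I :=
    sum_mem fun N hN => Ideal.mul_mem_mul
      (by simpa [(Finset.ne_of_mem_erase hN).symm] using hr N M) (hi N)
  have hself : (r M - 1) * i M ∈ (M : Ideal A) * I :=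
    Ideal.mul_mem_mul (by simpa using hr M M) (hi M)
  rw [← Finset.add_sum_erase _ _ (Finset.mem_univ M), add_mem_cancel_right hother] at hu
  exact hiM M (by simpa [sub_mul] using sub_mem hu hself)

variable [IsDomain A] {I J : Ideal A} {d : A}

theorem exists_eq_mul_of_le (hd : d ≠ 0) (hIJ : I * J = Ideal.span {d}) {K : Ideal A}
    (hK : K ≤ I) : ∃ C, K = I * C := by
  obtain ⟨C, hC⟩ : ∃ C, K * J = Ideal.span {d} * C := by
    refine ⟨Submodule.comap (LinearMap.mulLeft A d) (K * J), (Ideal.eq_span_singleton_mul _ _).2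
      ⟨fun z hz => ?_, fun z hz => hz⟩⟩
    obtain ⟨c, rfl⟩ := Ideal.mem_span_singleton.1 (hIJ ▸ Ideal.mul_mono_left hK hz)
    exact ⟨c, hz, rfl⟩
  refine ⟨C, (Ideal.span_singleton_mul_right_inj hd).1 ?_⟩
  rw [mul_left_comm, ← hC, ← hIJ]
  ring

theorem not_le_mul_of_ne_top (hd : d ≠ 0) (hIJ : I * J = Ideal.span {d}) {M : Ideal A}
    (hM : M ≠ ⊤) : ¬ I ≤ M * I := fun h => by
  have hle : Ideal.span {d} * ⊤ ≤ Ideal.span {d} * M := by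
    rw [Ideal.mul_top, mul_comm, ← hIJ, ← mul_assoc]
    exact Ideal.mul_mono_left h
  exact hM (top_le_iff.1 ((Ideal.span_singleton_mul_right_mono hd).1 hle))

theorem exists_isCoprime_mul_eq_span_singleton {F : Ideal A}
    (hF : {M : Ideal A | M.IsMaximal ∧ F ≤ M}.Finite) (hd : d ≠ 0) (hIJ : I * J = Ideal.span {d}) :
    ∃ C u, u ≠ 0 ∧ I * C = Ideal.span {u} ∧ IsCoprime C F := by
  by_cases hFtop : F = ⊤
  · exact ⟨J, d, hd, hIJ, by rw [hFtop, ← Ideal.one_eq_top]; exact isCoprime_one_right⟩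
  obtain ⟨u, huI, hu⟩ := exists_mem_forall_notMem_mul hF (fun M hM => hM.1)
    fun M hM => not_le_mul_of_ne_top hd hIJ hM.1.ne_top
  obtain ⟨C, hC⟩ := exists_eq_mul_of_le hd hIJ ((Ideal.span_singleton_le_iff_mem I).2 huI)
  refine ⟨C, u, ?_, hC.symm, ?_⟩
  · rintro rfl
    obtain ⟨M, hM, hFM⟩ := Ideal.exists_le_maximal F hFtop
    exact hu M ⟨hM, hFM⟩ (zero_mem _)
  · rw [Ideal.isCoprime_iff_sup_eq]
    by_contra hne
    obtain ⟨M, hM, hCFM⟩ := Ideal.exists_le_maximal _ hne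
    refine hu M ⟨hM, le_sup_right.trans hCFM⟩ ?_
    rw [mul_comm]
    exact Ideal.mul_mono_right (le_sup_left.trans hCFM) (hC ▸ Ideal.mem_span_singleton_self u)

theorem isUnit_coeIdeal_of_mul_eq_span_singleton (hd : d ≠ 0) (hIJ : I * J = Ideal.span {d}) :
    IsUnit (I : FractionalIdeal A⁰ (FractionRing A)) := by
  refine isUnit_of_mul_isUnit_left (y := (J : FractionalIdeal A⁰ (FractionRing A))) ?_
  rw [← FractionalIdeal.coeIdeal_mul, hIJ, FractionalIdeal.coeIdeal_span_singleton]
  have hd' : algebraMap A (FractionRing A) d ≠ 0 := by rwa [Ne, IsFractionRing.to_map_eq_zero_iff]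
  exact ⟨toPrincipalIdeal A (FractionRing A) (Units.mk0 _ hd'), coe_toPrincipalIdeal _⟩

theorem exists_mul_eq_span_singleton (hI : IsUnit (I : FractionalIdeal A⁰ (FractionRing A))) :
    ∃ J d, d ≠ 0 ∧ I * J = Ideal.span {d} := by
  obtain ⟨U, hU⟩ := hI
  refine ⟨(U⁻¹).1.num, (U⁻¹).1.den, nonZeroDivisors.coe_ne_zero _, ?_⟩
  apply FractionalIdeal.coeIdeal_injective (K := FractionRing A)
  simp only
  rw [FractionalIdeal.coeIdeal_mul, ← FractionalIdeal.den_mul_self_eq_num', ← hU, mul_left_comm,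
    Units.mul_inv, mul_one, FractionalIdeal.coeIdeal_span_singleton]

theorem exists_coeIdeal_eq_of_classGroup (γ : ClassGroup A) :
    ∃ (U : (FractionalIdeal A⁰ (FractionRing A))ˣ) (I : Ideal A),
      (U : FractionalIdeal A⁰ (FractionRing A)) = I ∧ ClassGroup.mk (FractionRing A) U = γ := by
  obtain ⟨V, rfl⟩ : ∃ V, ClassGroup.mk (FractionRing A) V = γ :=
    γ.induction (FractionRing A) fun V => ⟨V, rfl⟩
  obtain ⟨U, hU⟩ := FractionalIdeal.isUnit_num.2 V.isUnit
  have hden : algebraMap A (FractionRing A) V.1.den ≠ 0 :=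
    IsFractionRing.to_map_ne_zero_of_mem_nonZeroDivisors V.1.den.2
  refine ⟨U, V.1.num, hU, (ClassGroup.mk_eq_mk.2 ⟨Units.mk0 _ hden, Units.ext ?_⟩).symm⟩
  rw [mul_comm, Units.val_mul, coe_toPrincipalIdeal, Units.val_mk0, hU]
  exact FractionalIdeal.den_mul_self_eq_num' A⁰ (FractionRing A) V.1

theorem exists_isCoprime_of_classGroup {F : Ideal A}
    (hF : {M : Ideal A | M.IsMaximal ∧ F ≤ M}.Finite) (γ : ClassGroup A) :
    ∃ (U : (FractionalIdeal A⁰ (FractionRing A))ˣ) (C : Ideal A),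
      (U : FractionalIdeal A⁰ (FractionRing A)) = C ∧ ClassGroup.mk (FractionRing A) U = γ ∧
      IsCoprime C F := by
  obtain ⟨V, I, hVI, hV⟩ := exists_coeIdeal_eq_of_classGroup γ⁻¹
  obtain ⟨J, d, hd, hIJ⟩ := exists_mul_eq_span_singleton (hVI ▸ V.isUnit)
  obtain ⟨C, u, hu, hIC, hC⟩ := exists_isCoprime_mul_eq_span_singleton hF hd hIJ
  obtain ⟨U, hU⟩ := isUnit_coeIdeal_of_mul_eq_span_singleton hu ((mul_comm C I).trans hIC)
  refine ⟨U, C, hU, ?_, hC⟩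
  have hVU : ((V * U : (FractionalIdeal A⁰ (FractionRing A))ˣ) :
      FractionalIdeal A⁰ (FractionRing A)) = (I * C : Ideal A) := by
    rw [Units.val_mul, hVI, hU, FractionalIdeal.coeIdeal_mul]
  rw [← inv_inj, ← hV, inv_eq_iff_mul_eq_one, mul_comm, ← map_mul,
    ClassGroup.mk_eq_one_of_coe_ideal hVU]
  exact ⟨u, hu, hIC⟩

end InvertibleIdeal

/-! ### Regular primes -/

section RegularPrimes

variable {R : Type*} [CommRing R] {f : Ideal R}

/-- The regular primes of `R` with respect to `f`: the nonzero primes that do not contain `f`. -/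
abbrev RegularPrime (f : Ideal R) : Type _ :=
  {P : IsDedekindDomain.HeightOneSpectrum R // ¬ f ≤ P.asIdeal}

/-- The product ideal of a multiset of regular primes: the bijection between such multisets and the
nonzero ideals coprime to `f` given by unique factorization. -/
noncomputable def regProd (A : Multiset (RegularPrime f)) : Ideal R :=
  (A.map fun P => P.1.asIdeal).prod

theorem regProd_zero : regProd (0 : Multiset (RegularPrime f)) = 1 := rfl

theorem regProd_add (A B : Multiset (RegularPrime f)) :
    regProd (A + B) = regProd A * regProd B := by
  simp [regProd]

theorem regProd_nsmul (n : ℕ) (A : Multiset (RegularPrime f)) :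
    regProd (n • A) = regProd A ^ n := by
  simp [regProd, Multiset.map_nsmul, Multiset.prod_nsmul]

variable [IsDedekindDomain R]

theorem regProd_ne_bot (A : Multiset (RegularPrime f)) : regProd A ≠ ⊥ :=
  Multiset.prod_ne_zero fun h => by
    obtain ⟨P, -, hP⟩ := Multiset.mem_map.1 h
    exact P.1.ne_bot hP

theorem isCoprime_of_not_le {P : Ideal R} [P.IsPrime] (hP : P ≠ ⊥) (hfP : ¬ f ≤ P) :
    IsCoprime P f := by
  have hmax : P.IsMaximal := Ideal.IsPrime.isMaximal ‹_› hP
  rw [Ideal.isCoprime_iff_sup_eq]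
  by_contra h
  exact hfP (le_sup_right.trans (hmax.eq_of_le h le_sup_left).ge)

theorem isCoprime_regProd (A : Multiset (RegularPrime f)) : IsCoprime (regProd A) f := by
  induction A using Multiset.induction_on with
  | empty => exact isCoprime_one_left
  | cons P A ih =>
    rw [regProd, Multiset.map_cons, Multiset.prod_cons]
    exact (isCoprime_of_not_le P.1.ne_bot P.2).mul_left ih

theorem regProd_injective : Function.Injective (regProd (f := f)) := fun A B h => by
  have hprime (A : Multiset (RegularPrime f)) :
      ∀ I ∈ A.map fun P => P.1.asIdeal, Prime I := by
    intro I hI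
    obtain ⟨P, -, rfl⟩ := Multiset.mem_map.1 hI
    exact P.1.prime
  have hrel := prime_factors_unique (hprime A) (hprime B) (Associated.of_eq h)
  rw [associated_eq_eq, Multiset.rel_eq] at hrel
  exact Multiset.map_injective (fun P Q h => Subtype.ext (IsDedekindDomain.HeightOneSpectrum.ext h))
    hrel

theorem exists_regProd_eq {I : Ideal R} (hI : I ≠ ⊥) (hf : IsCoprime I f) :
    ∃ A : Multiset (RegularPrime f), regProd A = I := by
  obtain ⟨s, hs, hprod⟩ := UniqueFactorizationMonoid.exists_prime_factors I hI
  rw [associated_iff_eq] at hprod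
  subst hprod
  have hreg : ∀ P ∈ s, ∃ Q : RegularPrime f, Q.1.asIdeal = P := fun P hP => by
    have hPprime := Ideal.isPrime_of_prime (hs P hP)
    refine ⟨⟨⟨P, hPprime, (hs P hP).ne_zero⟩, fun hfP => hPprime.ne_top (top_le_iff.1 ?_)⟩, rfl⟩
    rw [← Ideal.isCoprime_iff_sup_eq.1 hf]
    exact sup_le (Ideal.le_of_dvd (Multiset.dvd_prod hP)) hfP
  choose Q hQ using hreg
  refine ⟨s.attach.map fun P : {P // P ∈ s} => Q P P.2, ?_⟩
  rw [regProd, Multiset.map_map]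
  simp only [Function.comp_apply, hQ, Multiset.attach_map_val]

/-- The ideal class of a regular prime. -/
noncomputable def RegularPrime.cls (P : RegularPrime f) : ClassGroup R :=
  ClassGroup.mk0 ⟨P.1.asIdeal, mem_nonZeroDivisors_of_ne_zero P.1.ne_bot⟩

theorem mem_blockMonoid_cls_iff {A : Multiset (RegularPrime f)} :
    A ∈ blockMonoid RegularPrime.cls ↔ ∃ x ≠ 0, regProd A = Ideal.span {x} := by
  let I : (Ideal R)⁰ := ⟨regProd A, mem_nonZeroDivisors_of_ne_zero (regProd_ne_bot A)⟩
  have hI : I = (A.map fun P => (⟨P.1.asIdeal, mem_nonZeroDivisors_of_ne_zero P.1.ne_bot⟩ :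
      (Ideal R)⁰)).prod := by
    refine Subtype.ext ?_
    rw [Submonoid.coe_multiset_prod, Multiset.map_map]
    rfl
  have hcls : (A.map RegularPrime.cls).prod = ClassGroup.mk0 I := by
    rw [hI, map_multiset_prod, Multiset.map_map]
    rfl
  rw [mem_blockMonoid, hcls, ← ClassGroup.mk_mk0 (FractionRing R)]
  exact ClassGroup.mk_eq_one_of_coe_ideal rfl

theorem ne_zero_of_regProd_eq_span {A : Multiset (RegularPrime f)} {x : R}
    (h : regProd A = Ideal.span {x}) : x ≠ 0 := by
  rintro rfl
  exact regProd_ne_bot A (by simpa using h)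

theorem regF_of_regProd_eq_span {A : Multiset (RegularPrime f)} {x : R}
    (h : regProd A = Ideal.span {x}) : RegF f x :=
  regF_iff_isCoprime.2 (h ▸ isCoprime_regProd A)

theorem exists_add_eq_of_regProd_eq_span_mul {X : Multiset (RegularPrime f)} {v w : R}
    (h : regProd X = Ideal.span {v * w}) :
    ∃ V W, X = V + W ∧ regProd V = Ideal.span {v} ∧ regProd W = Ideal.span {w} := by
  rw [← Ideal.span_singleton_mul_span_singleton] at h
  have hne := h ▸ regProd_ne_bot X
  have hcop := h ▸ isCoprime_regProd X
  obtain ⟨V, hV⟩ := exists_regProd_eq (left_ne_zero_of_mul hne) hcop.of_mul_left_left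
  obtain ⟨W, hW⟩ := exists_regProd_eq (right_ne_zero_of_mul hne) hcop.of_mul_left_right
  exact ⟨V, W, regProd_injective (by rw [regProd_add, hV, hW, h]), hV, hW⟩

end RegularPrimes

/-! ### The map from the Picard group to the class group -/

section Picard

variable {R : Type*} [CommRing R] {O : Subring R}

section IsDomain

variable [IsDomain R]

theorem coe_units_map_extendedHom {U : (FractionalIdeal O⁰ (FractionRing O))ˣ} {C : Ideal O}
    (hU : (U : FractionalIdeal O⁰ (FractionRing O)) = C) :
    ((Units.map (FractionalIdeal.extendedHom (FractionRing R) R).toMonoidHom U :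
      (FractionalIdeal R⁰ (FractionRing R))ˣ) : FractionalIdeal R⁰ (FractionRing R)) =
      C.map (algebraMap O R) := by
  rw [Units.coe_map, hU]
  exact FractionalIdeal.extendedHom_coeIdeal_eq_map (FractionRing R) R C

theorem exists_eq_span_singleton_of_map (htor : IsMulTorsion (R ⧸ O.conductor)ˣ)
    (hO : ∀ x, RegF O.conductor x → ∃ ε : Rˣ, x * ε ∈ O) {C : Ideal O}
    (hC : IsCoprime C (conductorInOrder O)) {x : R} (hx : x ≠ 0)
    (hCx : C.map (algebraMap O R) = Ideal.span {x}) : ∃ a ≠ 0, C = Ideal.span {a} := by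
  obtain ⟨ε, hε⟩ := hO x (regF_iff_isCoprime.2 (hCx ▸ isCoprime_map hC))
  rw [← Ideal.span_singleton_mul_right_unit ε.isUnit] at hCx
  refine ⟨⟨x * ε, hε⟩, fun h => mul_ne_zero hx ε.ne_zero (congrArg Subtype.val h), ?_⟩
  rw [← comap_map_of_isCoprime hC, hCx]
  exact comap_span_singleton_of_regF htor (a := ⟨x * ε, hε⟩)
    (regF_iff_isCoprime.2 (hCx ▸ isCoprime_map hC))

theorem extendedHom_injective (hfin : {M : Ideal O | M.IsMaximal ∧ conductorInOrder O ≤ M}.Finite)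
    (htor : IsMulTorsion (R ⧸ O.conductor)ˣ)
    (hO : ∀ x, RegF O.conductor x → ∃ ε : Rˣ, x * ε ∈ O) :
    Function.Injective (ClassGroup.extendedHom O R) := by
  refine (injective_iff_map_eq_one _).2 fun γ hγ => ?_
  obtain ⟨U, C, hUC, rfl, hC⟩ := exists_isCoprime_of_classGroup hfin γ
  rw [ClassGroup.extendedHom_mk,
    ClassGroup.mk_eq_one_of_coe_ideal (coe_units_map_extendedHom hUC)] at hγ
  obtain ⟨x, hx, hCx⟩ := hγ
  exact (ClassGroup.mk_eq_one_of_coe_ideal hUC).2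
    (exists_eq_span_singleton_of_map htor hO hC hx hCx)

end IsDomain

theorem extendedHom_surjective [IsDedekindDomain R] (htor : IsMulTorsion (R ⧸ O.conductor)ˣ)
    (hO : ∀ x, RegF O.conductor x → ∃ ε : Rˣ, x * ε ∈ O)
    (hcls : ∀ c : ClassGroup R, ∃ (P : Ideal R) (hP : P ∈ (Ideal R)⁰),
      P.IsPrime ∧ ¬ O.conductor ≤ P ∧ ClassGroup.mk0 ⟨P, hP⟩ = c) :
    Function.Surjective (ClassGroup.extendedHom O R) := by
  intro γ
  obtain ⟨P, hP, _, hfP, rfl⟩ := hcls γ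
  obtain ⟨Q, hQ, _, hfQ, hPQ⟩ := hcls (ClassGroup.mk0 ⟨P, hP⟩)⁻¹
  have hPcop := isCoprime_of_not_le (nonZeroDivisors.ne_zero hP) hfP
  have hQcop := isCoprime_of_not_le (nonZeroDivisors.ne_zero hQ) hfQ
  have hprin : ((⟨P, hP⟩ * ⟨Q, hQ⟩ : (Ideal R)⁰) : Ideal R).IsPrincipal := by
    rw [← ClassGroup.mk0_eq_one_iff (SetLike.coe_mem _)]
    exact (map_mul _ _ _).trans (by rw [hPQ, mul_inv_cancel])
  obtain ⟨x, hx⟩ := hprin.principal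
  replace hx : P * Q = Ideal.span {x} := hx
  obtain ⟨a, ha, hPQa⟩ := exists_eq_span_singleton_of_map htor hO (x := x)
    ((isCoprime_comap hPcop).mul_left (isCoprime_comap hQcop)) (by
      rintro rfl
      rw [Set.singleton_zero, Ideal.span_zero] at hx
      exact nonZeroDivisors.ne_zero (mul_mem hP hQ) hx)
    (by rw [Ideal.map_mul, map_comap_of_isCoprime hPcop, map_comap_of_isCoprime hQcop, hx])
  obtain ⟨U, hU⟩ := isUnit_coeIdeal_of_mul_eq_span_singleton ha hPQa
  refine ⟨ClassGroup.mk _ U, ?_⟩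
  rw [ClassGroup.extendedHom_mk, ← ClassGroup.mk_mk0 (FractionRing R)]
  congr 1
  refine Units.ext ?_
  rw [coe_units_map_extendedHom hU, map_comap_of_isCoprime hPcop]
  rfl

end Picard

/-! ### The Krull overmonoid -/

section KrullOvermonoid

theorem IsKrullMonoid.dvd_of_forall_pow_dvd {M : Type*} [CommMonoid M] (hM : IsKrullMonoid M)
    {a b s : M} (h : ∀ n : ℕ, b ^ n ∣ s * a ^ n) : b ∣ a := by
  obtain ⟨ι, d, hd⟩ := hM
  have hle : (d b).toAdd ≤ (d a).toAdd := fun i => by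
    by_contra! hlt
    obtain ⟨t, ht⟩ := h ((d s).toAdd i + 1)
    have hi := congrArg (fun z => (d z).toAdd i) ht
    simp only [map_mul, map_pow, toAdd_mul, toAdd_pow, Finsupp.add_apply, Finsupp.smul_apply,
      smul_eq_mul] at hi
    have hmul := Nat.mul_le_mul_left ((d s).toAdd i + 1) (Nat.succ_le_of_lt hlt)
    rw [Nat.mul_succ] at hmul
    omega
  refine hd b a ⟨.ofAdd ((d a).toAdd - (d b).toAdd), ?_⟩
  rw [← ofAdd_toAdd (d a), ← ofAdd_toAdd (d b), ← ofAdd_add, toAdd_ofAdd, toAdd_ofAdd,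
    add_tsub_cancel_of_le hle]

theorem assocIn_iff_exists_units {K : Type*} [CommRing K] {H : Submonoid K} {x y : K} :
    AssocIn H x y ↔ ∃ ε : Hˣ, x = y * ((ε : H) : K) := by
  constructor
  · rintro ⟨ε, hε, ⟨ε', hε', h⟩, hxy⟩
    exact ⟨Units.mkOfMulEqOne ⟨ε, hε⟩ ⟨ε', hε'⟩ (Subtype.ext h), hxy⟩
  · rintro ⟨ε, hxy⟩
    exact ⟨_, (ε : H).2, ⟨_, ((ε⁻¹ : Hˣ) : H).2, congrArg Subtype.val ε.mul_inv⟩, hxy⟩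

variable {R : Type*} [CommRing R]

/-- Two multisets of regular primes are related if their product ideals differ by a factor in the
unit group of `H`. -/
def unitCon (f : Ideal R) (H : Submonoid (FractionRing R)) :
    AddCon (Multiset (RegularPrime f)) where
  r A B := ∃ ε : Hˣ, (regProd A : FractionalIdeal R⁰ (FractionRing R)) =
    FractionalIdeal.spanSingleton R⁰ ((ε : H) : FractionRing R) * (regProd B : Ideal R)
  iseqv := by
    refine ⟨fun A => ⟨1, by simp⟩, fun {A B} ⟨ε, h⟩ => ⟨ε⁻¹, ?_⟩, fun ⟨ε, h⟩ ⟨δ, h'⟩ => ⟨ε * δ, ?_⟩⟩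
    · rw [h, ← mul_assoc, FractionalIdeal.spanSingleton_mul_spanSingleton, ← Submonoid.coe_mul,
        ε.inv_mul, Submonoid.coe_one, FractionalIdeal.spanSingleton_one, one_mul]
    · rw [h, h', ← mul_assoc, FractionalIdeal.spanSingleton_mul_spanSingleton]
      rfl
  add' := by
    rintro A B C D ⟨ε, h⟩ ⟨δ, h'⟩
    refine ⟨ε * δ, ?_⟩
    rw [regProd_add, regProd_add, FractionalIdeal.coeIdeal_mul, FractionalIdeal.coeIdeal_mul, h, h',
      mul_mul_mul_comm, FractionalIdeal.spanSingleton_mul_spanSingleton]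
    rfl

/-- The multisets of regular primes whose product ideal is generated by an element of `O`. -/
noncomputable def orderSubmonoid (O : Subring R) :
    AddSubmonoid (Multiset (RegularPrime O.conductor)) where
  carrier := {A | ∃ o ∈ O, regProd A = Ideal.span {o}}
  zero_mem' := ⟨1, O.one_mem, by rw [regProd_zero, Ideal.span_singleton_one, Ideal.one_eq_top]⟩
  add_mem' := by
    rintro A B ⟨o, ho, hA⟩ ⟨p, hp, hB⟩
    exact ⟨o * p, O.mul_mem ho hp, by
      rw [regProd_add, hA, hB, Ideal.span_singleton_mul_span_singleton]⟩

variable [IsDedekindDomain R]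

theorem IsTKOvermonoid.algebraMap_mem {O : Subring R} {H : Submonoid (FractionRing R)}
    (hH : IsTKOvermonoid O H) (hf : O.conductor ≠ ⊥)
    (hfrac : ∀ r : R, ∃ a b : O, (b : R) ≠ 0 ∧ (b : R) * r = (a : R)) {r : R} (hr : r ≠ 0) :
    algebraMap R (FractionRing R) r ∈ H := by
  obtain ⟨s, hs, hs₀⟩ := Submodule.exists_mem_ne_zero_of_ne_bot hf
  obtain ⟨a, b, hb₀, hab⟩ := hfrac r
  have ha₀ : (a : R) ≠ 0 := hab ▸ mul_ne_zero hb₀ hr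
  have hdvd := hH.krull.dvd_of_forall_pow_dvd (a := ⟨_, hH.incl a a.2 ha₀⟩)
    (b := ⟨_, hH.incl b b.2 hb₀⟩) (s := ⟨_, hH.incl s (mem_of_mem_conductor hs) hs₀⟩) fun n => by
      refine ⟨⟨_, hH.incl (s * r ^ n) (hs _) (mul_ne_zero hs₀ (pow_ne_zero n hr))⟩,
        Subtype.ext ?_⟩
      simp only [Submonoid.coe_mul, SubmonoidClass.coe_pow, ← map_pow, ← map_mul, ← hab]
      congr 1
      ring
  obtain ⟨⟨x, hx⟩, hax⟩ := hdvd
  have hax' := congrArg Subtype.val hax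
  simp only [Submonoid.coe_mul] at hax'
  rw [← hab, map_mul] at hax'
  rwa [mul_left_cancel₀ (hH.nonzero _ (hH.incl b b.2 hb₀)) hax']

theorem unitCon_iff_assocIn {f : Ideal R} {H : Submonoid (FractionRing R)}
    (hRH : ∀ r : R, r ≠ 0 → algebraMap R (FractionRing R) r ∈ H) {A B : Multiset (RegularPrime f)}
    {a b : R} (hA : regProd A = Ideal.span {a}) (hB : regProd B = Ideal.span {b}) :
    unitCon f H A B ↔
      AssocIn H (algebraMap R (FractionRing R) a) (algebraMap R (FractionRing R) b) := by
  change (∃ ε : Hˣ, _ = _) ↔ _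
  simp only [assocIn_iff_exists_units, hA, hB, FractionalIdeal.coeIdeal_span_singleton,
    FractionalIdeal.spanSingleton_mul_spanSingleton]
  constructor
  · rintro ⟨ε, h⟩
    obtain ⟨u, hu⟩ := FractionalIdeal.spanSingleton_eq_spanSingleton.1 h.symm
    let u' : Hˣ := Units.mkOfMulEqOne ⟨_, hRH u u.ne_zero⟩ ⟨_, hRH (u⁻¹ : Rˣ) u⁻¹.ne_zero⟩
      (Subtype.ext (by rw [Submonoid.coe_mul, ← map_mul, u.mul_inv, map_one, Submonoid.coe_one]))
    refine ⟨u' * ε, ?_⟩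
    rw [← hu, Units.smul_def, Algebra.smul_def, ← mul_assoc, mul_comm]
    rfl
  · rintro ⟨ε, h⟩
    exact ⟨ε, by rw [h, mul_comm]⟩

variable {O : Subring R} {A B : Multiset (RegularPrime O.conductor)}

theorem mem_orderSubmonoid_of_add_mem (htor : IsMulTorsion (R ⧸ O.conductor)ˣ)
    (hA : A ∈ orderSubmonoid O) (hAB : A + B ∈ orderSubmonoid O) : B ∈ orderSubmonoid O := by
  obtain ⟨a, ha, hA⟩ := hA
  obtain ⟨o, ho, hAB⟩ := hAB
  rw [regProd_add, hA] at hAB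
  obtain ⟨y, rfl⟩ : a ∣ o := by
    rw [← Ideal.span_singleton_le_span_singleton, ← hAB]
    exact Ideal.mul_le_left
  rw [← Ideal.span_singleton_mul_span_singleton,
    Ideal.span_singleton_mul_right_inj (ne_zero_of_regProd_eq_span hA)] at hAB
  exact ⟨y, mem_of_mul_mem (a := ⟨a, ha⟩)
    (RegF.isCoprime_conductorInOrder htor (regF_of_regProd_eq_span hA)) ho, hAB⟩

theorem exists_nsmul_mem_orderSubmonoid (htor : IsMulTorsion (R ⧸ O.conductor)ˣ)
    (hA : A ∈ blockMonoid RegularPrime.cls) : ∃ n ≠ 0, n • A ∈ orderSubmonoid O := by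
  obtain ⟨x, -, hx⟩ := mem_blockMonoid_cls_iff.1 hA
  obtain ⟨n, hn, hxn⟩ := (regF_of_regProd_eq_span hx).exists_pow_mem htor
  exact ⟨n, hn, x ^ n, hxn, by rw [regProd_nsmul, hx, Ideal.span_singleton_pow]⟩

theorem exists_units_mul_mem (h : orderSubmonoid O = blockMonoid RegularPrime.cls) {x : R}
    (hx : RegF O.conductor x) : ∃ ε : Rˣ, x * ε ∈ O := by
  rcases eq_or_ne x 0 with rfl | hx₀
  · exact ⟨1, by simp⟩
  obtain ⟨A, hA⟩ := exists_regProd_eq (by simpa using hx₀) (regF_iff_isCoprime.1 hx)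
  obtain ⟨o, ho, hAo⟩ : A ∈ orderSubmonoid O := h ▸ mem_blockMonoid_cls_iff.2 ⟨x, hx₀, hA⟩
  obtain ⟨ε, rfl⟩ := Ideal.span_singleton_eq_span_singleton.1 (hA.symm.trans hAo)
  exact ⟨ε, ho⟩

namespace IsTKOvermonoid

variable {H : Submonoid (FractionRing R)}

theorem eq_zero_of_unitCon (hH : IsTKOvermonoid O H)
    (hRH : ∀ r : R, r ≠ 0 → algebraMap R (FractionRing R) r ∈ H) (hA : A ∈ orderSubmonoid O)
    (h : unitCon O.conductor H A 0) : A = 0 := by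
  obtain ⟨o, ho, hAo⟩ := hA
  have hzero : regProd (0 : Multiset (RegularPrime O.conductor)) = Ideal.span {1} := by
    rw [regProd_zero, Ideal.span_singleton_one, Ideal.one_eq_top]
  obtain ⟨ε, -, ⟨ε', hε', hεε'⟩, hoε⟩ := (unitCon_iff_assocIn hRH hAo hzero).1 h
  rw [map_one, one_mul] at hoε
  obtain ⟨b, -, hob⟩ :=
    hH.t1' o ho (ne_zero_of_regProd_eq_span hAo) ⟨ε', hε', by rw [hoε, hεε']⟩
  refine regProd_injective ?_
  rw [hAo, hzero, Ideal.span_singleton_one, Ideal.span_singleton_eq_top]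
  exact .of_mul_eq_one b hob

theorem exists_add_eq_of_unitCon_add (hH : IsTKOvermonoid O H)
    (hRH : ∀ r : R, r ≠ 0 → algebraMap R (FractionRing R) r ∈ H)
    {X Y Z : Multiset (RegularPrime O.conductor)} (hX : X ∈ orderSubmonoid O)
    (hY : Y ∈ blockMonoid RegularPrime.cls) (hZ : Z ∈ blockMonoid RegularPrime.cls)
    (h : unitCon O.conductor H X (Y + Z)) :
    ∃ V ∈ orderSubmonoid O, ∃ W ∈ orderSubmonoid O,
      X = V + W ∧ unitCon O.conductor H V Y ∧ unitCon O.conductor H W Z := by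
  obtain ⟨o, ho, hXo⟩ := hX
  obtain ⟨y, hy₀, hYy⟩ := mem_blockMonoid_cls_iff.1 hY
  obtain ⟨z, hz₀, hZz⟩ := mem_blockMonoid_cls_iff.1 hZ
  have hYZ : regProd (Y + Z) = Ideal.span {y * z} := by
    rw [regProd_add, hYy, hZz, Ideal.span_singleton_mul_span_singleton]
  obtain ⟨ε, hoε⟩ := assocIn_iff_exists_units.1 ((unitCon_iff_assocIn hRH hXo hYZ).1 h)
  obtain ⟨v, w, hv, hw, rfl, hvy, hwz⟩ := hH.t2 o ho (ne_zero_of_regProd_eq_span hXo) _ (hRH y hy₀)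
    (algebraMap R _ z * (ε : H)) (H.mul_mem (hRH z hz₀) (ε : H).2)
    (by rw [hoε, map_mul, mul_assoc])
  obtain ⟨δ, hwz⟩ := assocIn_iff_exists_units.1 hwz
  obtain ⟨V, W, rfl, hV, hW⟩ := exists_add_eq_of_regProd_eq_span_mul hXo
  refine ⟨V, ⟨v, hv, hV⟩, W, ⟨w, hw, hW⟩, rfl, (unitCon_iff_assocIn hRH hV hYy).2 hvy,
    (unitCon_iff_assocIn hRH hW hZz).2 (assocIn_iff_exists_units.2 ⟨ε * δ, ?_⟩)⟩
  rw [hwz, mul_assoc]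
  rfl

theorem isTransferSubmonoid (hH : IsTKOvermonoid O H) (htor : IsMulTorsion (R ⧸ O.conductor)ˣ)
    (hRH : ∀ r : R, r ≠ 0 → algebraMap R (FractionRing R) r ∈ H) :
    IsTransferSubmonoid RegularPrime.cls (orderSubmonoid O) (unitCon O.conductor H) where
  le_blockMonoid := fun _ ⟨o, _, hA⟩ =>
    mem_blockMonoid_cls_iff.2 ⟨o, ne_zero_of_regProd_eq_span hA, hA⟩
  mem_of_add_mem := mem_orderSubmonoid_of_add_mem htor
  exists_nsmul_mem := exists_nsmul_mem_orderSubmonoid htor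
  eq_zero := hH.eq_zero_of_unitCon hRH
  split := hH.exists_add_eq_of_unitCon_add hRH

end IsTKOvermonoid

end KrullOvermonoid

theorem picard_iso_class_group_general {R : Type*} [CommRing R] [IsDedekindDomain R]
    (O : Subring R) (hfg : Module.Finite O R)
    (hfrac : ∀ r : R, ∃ a b : O, (b : R) ≠ 0 ∧ (b : R) * r = (a : R))
    (htor : IsMulTorsion (R ⧸ O.conductor)ˣ)
    (hcls : ∀ c : ClassGroup R, ∃ (P : Ideal R) (hP : P ∈ (Ideal R)⁰),
      P.IsPrime ∧ ¬ O.conductor ≤ P ∧ ClassGroup.mk0 ⟨P, hP⟩ = c)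
    (H : Submonoid (FractionRing R)) (hH : IsTKOvermonoid O H)
    (hcard : Nat.card (ClassGroup R) ≠ 2) : Function.Bijective (ClassGroup.extendedHom O R) := by
  have hf : O.conductor ≠ ⊥ := conductor_ne_bot hfrac
  have hsurj : Function.Surjective (RegularPrime.cls (f := O.conductor)) := fun c => by
    obtain ⟨P, hP, hPprime, hfP, hPc⟩ := hcls c
    exact ⟨⟨⟨P, hPprime, nonZeroDivisors.ne_zero hP⟩, hfP⟩, hPc⟩
  have hS := (hH.isTransferSubmonoid htor fun _ => hH.algebraMap_mem hf hfrac).eq_blockMonoid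
    hsurj hcard
  have hO (x : R) : RegF O.conductor x → ∃ ε : Rˣ, x * ε ∈ O := exists_units_mul_mem hS
  exact ⟨extendedHom_injective (finite_isMaximal_conductorInOrder_le hf) htor hO,
    extendedHom_surjective htor hO hcls⟩

theorem picard_iso_class_group
    {R : Type*} [CommRing R] [IsDomain R] [IsDedekindDomain R]
    (O : Subring R) (hne : O ≠ ⊤) (hfg : Module.Finite ↥O R)
    (hfrac : ∀ r : R, ∃ a b : ↥O, (b : R) ≠ 0 ∧ (b : R) * r = (a : R))
    (htor : ∀ c : ClassGroup R, ∃ n : ℕ, 0 < n ∧ c ^ n = 1)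
    (hfin : Finite (R ⧸ O.conductor))
    (hcls : ∀ c : ClassGroup R, ∃ (P : Ideal R) (hP : P ∈ (Ideal R)⁰),
      P.IsPrime ∧ ¬ O.conductor ≤ P ∧ ClassGroup.mk0 ⟨P, hP⟩ = c)
    (H : Submonoid (FractionRing R)) (hH : IsTKOvermonoid O H)
    (hcard : Nat.card (ClassGroup R) ≠ 2) :
    Nonempty (ClassGroup ↥O ≃* ClassGroup R) := by
  exact ⟨.ofBijective _ (picard_iso_class_group_general O hfg hfrac isMulTorsion_of_finite hcls H hH
    hcard)⟩
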